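/- arXiv:2603.14516 — 2 statements merged into one kernel-verified Lean document; each statement's English description precedes it below -/
import Mathlib

section
/- Consider the network setting: G is a finite simple undirected connected graph with node set {1,…,n} and p edges, with oriented incidence matrix D ∈ ℝ^{n×p}; each edge k carries a Borel measurable coupling φ_k : ℝ → ℝ sector bounded with bounds 0 < α_k ≤ ᾱ_k; and for every edge k with end nodes i, j: 1/ᾱ_k + ν_i + ν_j − (r_i − 1)|ν_i| − (r_j − 1)|ν_j| > 0, where r_i is the degree of node i in G and ν₁,…,νₙ ∈ ℝ. A new node n+1 with index ν_{n+1} ∈ ℝ is joined to a node c ∈ {1,…,n} by a new edge carrying a Borel measurable coupling φ_{new} sector bounded with bounds 0 < α_{new} ≤ ᾱ_{new}; let D_new ∈ ℝ^{(n+1)×(p+1)} be an oriented incidence matrix of the augmented graph. Assume ν_c ≠ 0 and γ(1/ᾱ_{new} + ν_{n+1} + ν_c) − r_c|ν_c| > 0, where γ := min over neighbours j of c in G of [1/ᾱ_{cj} + ν_c + ν_j − (r_c − 1)|ν_c| − (r_j − 1)|ν_j|]/|ν_c|. Let y_i, w_i : [0,∞) → ℝ (i = 1,…,n+1) be locally square-integrable,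 set Y_new = (y₁,…,y_{n+1})ᵀ, W_new = (w₁,…,w_{n+1})ᵀ, define V_new(t) by applying the edge couplings componentwise to D_newᵀ(Y_new(t)+W_new(t)), and define U_new(t) = −D_new V_new(t) with components u_i. Suppose for every i ∈ {1,…,n+1} there exists δ_i ∈ ℝ such that for all T ≥ 0: ∫₀ᵀ u_i(t) y_i(t) dt ≥ ν_i ∫₀ᵀ u_i(t)² dt + δ_i. Then there exist ρ > 0 and σ ≥ 0 such that ‖D_newᵀ Y_new‖_T ≤ ρ ‖D_newᵀ W_new‖_T + σ for all T ≥ 0, i.e., input–output consensus is preserved in the augmented network. -/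
/-!
Write `z = Dᵀ(Y + W)` and `V = φ(z)`, and let `D` be the augmented incidence matrix. Since
`U = -D V`, summing the passivity inequalities over the nodes gives
`∫ Vᵀz + ∑ ν_i ∫ u_i² + ∑ δ_i ≤ ∫ Vᵀ DᵀW`, and the sector bound yields `V_k z_k ≥ V_k² / b_k`, where
`b_k` is the upper sector bound. So the theorem follows (`consensus_of_coercive`) as soon as the
quadratic form `∑ v_k² / b_k + ∑ ν_i (D v)_i²` is at least `ε |v|²` for some `ε > 0`: Young's
inequality then bounds `∫ |V|²` by `∫ |DᵀW|²` up to constants, and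
`DᵀY = z - DᵀW` with `|z_k| ≤ |V_k| / a_k`, where `a_k` is the lower sector bound.

The coercivity is `aug_coercive`. At each old node the terms coming from old edges are estimated by
diagonal dominance (`node_bound`), which produces exactly the edge margins assumed positive. The
cross terms between the new edge and the old edges at `c` are split by a weighted Young inequality
(`cross_bound`) with a weight slightly smaller than `γ`, so that the old edges at `c` keep a positive
margin while the interface condition keeps the margin of the new edge positive.
-/

open Matrix MeasureTheory

/-- A finite simple undirected graph with an orientation assigned to each edge:
`pEnd e` is the positive end node of edge `e` and `nEnd e` its negative end node. -/
structure OGraph (V : Type*) (E : Type*) where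
  pEnd : E → V
  nEnd : E → V
  ends_ne : ∀ e, pEnd e ≠ nEnd e
  simple : ∀ e f, e ≠ f → ({pEnd e, nEnd e} : Set V) ≠ {pEnd f, nEnd f}

/-- The oriented incidence matrix. -/
def OGraph.incMatrix {V E : Type*} [DecidableEq V] (G : OGraph V E) : Matrix V E ℝ :=
  Matrix.of fun i e => if G.pEnd e = i then 1 else if G.nEnd e = i then -1 else 0

/-- The set `L_i^± = L_i^+ ∪ L_i^-` of edges incident to node `i`. -/
def OGraph.incident {V E : Type*} [DecidableEq V] [Fintype E]
    (G : OGraph V E) (i : V) : Finset E :=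
  Finset.univ.filter fun e => G.pEnd e = i ∨ G.nEnd e = i

/-- The end node of edge `e` other than `i`. -/
def OGraph.otherEnd {V E : Type*} [DecidableEq V] (G : OGraph V E) (i : V) (e : E) : V :=
  if G.pEnd e = i then G.nEnd e else G.pEnd e

/-- The underlying simple graph of an oriented graph. -/
def OGraph.toSimpleGraph {V E : Type*} (G : OGraph V E) : SimpleGraph V :=
  SimpleGraph.fromRel fun i j => ∃ e, G.pEnd e = i ∧ G.nEnd e = j

/-- The incidence matrix `D_new = [[D, Υ], [0ᵀ, 1]]` of the graph obtained by joining a new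
node `n+1` (positive end) to the node `c` (negative end) by a single new edge. -/
noncomputable def augIncMatrix {n p : ℕ} (G : OGraph (Fin n) (Fin p)) (c : Fin n) :
    Matrix (Fin (n + 1)) (Fin (p + 1)) ℝ :=
  Matrix.of fun i k =>
    if hi : (i : ℕ) < n then
      if hk : (k : ℕ) < p then G.incMatrix ⟨i, hi⟩ ⟨k, hk⟩
      else if (⟨i, hi⟩ : Fin n) = c then -1 else 0
    else
      if (k : ℕ) < p then 0 else 1

/-- The truncated `L²` norm `‖f‖_T = (∫₀ᵀ |f(t)|² dt)^{1/2}` of a vector-valued signal. -/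
noncomputable def normT {ι : Type*} [Fintype ι] (f : ℝ → ι → ℝ) (T : ℝ) : ℝ :=
  Real.sqrt (∫ t in (0:ℝ)..T, ∑ k, (f t k) ^ 2)

/-! ### Finite-dimensional coercivity -/

/-- Diagonal dominance for one node: expanding the square, each of the `|S| - 1` cross terms that
involve `a k` is absorbed by the squares at the cost `|ν|`. -/
lemma node_bound {E : Type*} (S : Finset E) (a : E → ℝ) (ν : ℝ) :
    (ν - ((S.card : ℝ) - 1) * |ν|) * ∑ k ∈ S, a k ^ 2 ≤ ν * (∑ k ∈ S, a k) ^ 2 := by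
  have hQ : 0 ≤ ∑ k ∈ S, a k ^ 2 := Finset.sum_nonneg fun k _ => sq_nonneg _
  rcases le_total 0 ν with h | h
  · rw [abs_of_nonneg h]
    rcases Nat.lt_or_ge S.card 2 with h2 | h2
    · have h3 : S.card = 0 ∨ S.card = 1 := by omega
      rcases h3 with h3 | h3
      · rw [Finset.card_eq_zero] at h3
        subst h3
        simp
      · obtain ⟨x, rfl⟩ := Finset.card_eq_one.1 h3
        simp
    · have h2' : (2 : ℝ) ≤ S.card := by exact_mod_cast h2
      have h4 : (ν - ((S.card : ℝ) - 1) * ν) * ∑ k ∈ S, a k ^ 2 ≤ 0 :=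
        mul_nonpos_of_nonpos_of_nonneg (by nlinarith) hQ
      exact h4.trans (by positivity)
  · rw [abs_of_nonpos h]
    have h5 : (∑ k ∈ S, a k) ^ 2 ≤ S.card * ∑ k ∈ S, a k ^ 2 := sq_sum_le_card_mul_sum_sq
    nlinarith

/-- Weighted Young inequality for the cross terms between one new edge value `x` and the edge
values `a k` already present at a node. -/
lemma cross_bound {E : Type*} (S : Finset E) (a : E → ℝ) (ν x g : ℝ) (hg : 0 < g) :
    2 * ν * (∑ k ∈ S, a k) * x
      ≤ |ν| * (g * ∑ k ∈ S, a k ^ 2) + S.card * |ν| / g * x ^ 2 := by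
  have h1 : ∀ k ∈ S, 2 * ν * a k * x ≤ |ν| * (g * a k ^ 2) + |ν| / g * x ^ 2 := by
    intro k _
    have h2 : 2 * |a k| * |x| ≤ g * a k ^ 2 + x ^ 2 / g := by
      have h3 : g * a k ^ 2 + x ^ 2 / g - 2 * |a k| * |x| = (g * |a k| - |x|) ^ 2 / g := by
        rw [← sq_abs (a k), ← sq_abs x]
        field_simp
        ring
      have h4 : 0 ≤ (g * |a k| - |x|) ^ 2 / g := by positivity
      linarith
    calc 2 * ν * a k * x ≤ |2 * ν * a k * x| := le_abs_self _
      _ = |ν| * (2 * |a k| * |x|) := by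
        rw [abs_mul, abs_mul, abs_mul, abs_two]
        ring
      _ ≤ |ν| * (g * a k ^ 2 + x ^ 2 / g) := by gcongr
      _ = _ := by ring
  calc 2 * ν * (∑ k ∈ S, a k) * x = ∑ k ∈ S, 2 * ν * a k * x := by
        rw [Finset.mul_sum, Finset.sum_mul]
    _ ≤ ∑ k ∈ S, (|ν| * (g * a k ^ 2) + |ν| / g * x ^ 2) := Finset.sum_le_sum h1
    _ = _ := by
      rw [Finset.sum_add_distrib, Finset.sum_const, nsmul_eq_mul, ← Finset.mul_sum,
        ← Finset.mul_sum]
      ring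

lemma exists_pos_lower {ι : Type*} [Finite ι] (m : ι → ℝ) (hm : ∀ k, 0 < m k) :
    ∃ ε > 0, ∀ k, ε ≤ m k := by
  rcases isEmpty_or_nonempty ι with h | h
  · exact ⟨1, one_pos, fun k => h.elim k⟩
  · obtain ⟨k, hk⟩ := Finite.exists_min m
    exact ⟨m k, hm k, hk⟩

lemma incMatrix_mulVec {V E : Type*} [DecidableEq V] [Fintype E] (G : OGraph V E)
    (v : E → ℝ) (i : V) :
    (G.incMatrix.mulVec v) i = ∑ k ∈ G.incident i, G.incMatrix i k * v k := by
  rw [Matrix.mulVec, dotProduct]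
  symm
  apply Finset.sum_subset (Finset.subset_univ _)
  intro k _ hk
  simp only [OGraph.incident, Finset.mem_filter, Finset.mem_univ, true_and, not_or] at hk
  simp [OGraph.incMatrix, hk.1, hk.2]

lemma incMatrix_mul_sq {V E : Type*} [DecidableEq V] [Fintype E] (G : OGraph V E)
    (v : E → ℝ) (i : V) :
    ∑ k ∈ G.incident i, (G.incMatrix i k * v k) ^ 2 = ∑ k ∈ G.incident i, v k ^ 2 := by
  apply Finset.sum_congr rfl
  intro k hk
  simp only [OGraph.incident, Finset.mem_filter, Finset.mem_univ, true_and] at hk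
  simp only [OGraph.incMatrix, Matrix.of_apply]
  split_ifs <;> simp_all

/-- Double counting of incidences: each edge is seen once from each of its two ends. -/
lemma sum_incident {V E : Type*} [DecidableEq V] [Fintype V] [Fintype E] (G : OGraph V E)
    (f : V → ℝ) (q : E → ℝ) :
    ∑ i, f i * ∑ k ∈ G.incident i, q k = ∑ k, (f (G.pEnd k) + f (G.nEnd k)) * q k := by
  have h1 : ∀ i, f i * ∑ k ∈ G.incident i, q k
      = ∑ k, ((if G.pEnd k = i then f i * q k else 0)
          + (if G.nEnd k = i then f i * q k else 0)) := by
    intro i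
    rw [OGraph.incident, Finset.sum_filter, Finset.mul_sum]
    apply Finset.sum_congr rfl
    intro k _
    have := G.ends_ne k
    by_cases h1 : G.pEnd k = i <;> by_cases h2 : G.nEnd k = i
    · exact absurd (h1.trans h2.symm) this
    all_goals simp [h1, h2]
  simp_rw [h1]
  rw [Finset.sum_comm]
  apply Finset.sum_congr rfl
  intro k _
  rw [Finset.sum_add_distrib]
  simp
  ring

lemma aug_mulVec_castSucc {n p : ℕ} (G : OGraph (Fin n) (Fin p)) (c : Fin n)
    (v : Fin (p + 1) → ℝ) (i : Fin n) :
    ((augIncMatrix G c).mulVec v) i.castSucc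
      = (G.incMatrix.mulVec fun k => v k.castSucc) i - if i = c then v (Fin.last p) else 0 := by
  simp only [Matrix.mulVec, dotProduct, Fin.sum_univ_castSucc, augIncMatrix, Matrix.of_apply]
  by_cases h : i = c <;> simp [h, sub_eq_add_neg]

lemma aug_mulVec_last {n p : ℕ} (G : OGraph (Fin n) (Fin p)) (c : Fin n)
    (v : Fin (p + 1) → ℝ) :
    ((augIncMatrix G c).mulVec v) (Fin.last n) = v (Fin.last p) := by
  simp [Matrix.mulVec, dotProduct, Fin.sum_univ_castSucc, augIncMatrix, Matrix.of_apply]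

/-- Strict positivity of the quadratic form that governs the augmented network. The weight `g` in
the Young inequality at node `c` lies strictly between `r_c |ν_c| / S`, with
`S = 1 / αnewhi + νnew + ν c`, and the minimal normalised edge margin `γ`. -/
lemma aug_coercive {n p : ℕ} (G : OGraph (Fin n) (Fin p)) (αhi : Fin p → ℝ)
    (ν : Fin n → ℝ) (νnew : ℝ)
    (hedge : ∀ k : Fin p,
      0 < 1 / αhi k + ν (G.pEnd k) + ν (G.nEnd k)
        - (((G.incident (G.pEnd k)).card : ℝ) - 1) * |ν (G.pEnd k)|
        - (((G.incident (G.nEnd k)).card : ℝ) - 1) * |ν (G.nEnd k)|)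
    (c : Fin n) (hνc : ν c ≠ 0) (hcne : (G.incident c).Nonempty) (αnewhi : ℝ)
    (γ : ℝ)
    (hγ : γ = sInf ((fun l =>
        (1 / αhi l + ν c + ν (G.otherEnd c l)
          - (((G.incident c).card : ℝ) - 1) * |ν c|
          - (((G.incident (G.otherEnd c l)).card : ℝ) - 1) * |ν (G.otherEnd c l)|)
        / |ν c|) '' ↑(G.incident c)))
    (hint : 0 < γ * (1 / αnewhi + νnew + ν c) - ((G.incident c).card : ℝ) * |ν c|) :
    ∃ ε > 0, ∀ v : Fin (p + 1) → ℝ,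
      ε * ∑ k, v k ^ 2 ≤
        ∑ k, v k ^ 2 / (Fin.snoc αhi αnewhi : Fin (p + 1) → ℝ) k
        + ∑ i, (Fin.snoc ν νnew : Fin (n + 1) → ℝ) i
            * ((augIncMatrix G c).mulVec v) i ^ 2 := by
  have hνc' : 0 < |ν c| := abs_pos.2 hνc
  set f : Fin n → ℝ := fun i => ν i - (((G.incident i).card : ℝ) - 1) * |ν i| with hf
  set e : Fin p → ℝ := fun k => 1 / αhi k + (f (G.pEnd k) + f (G.nEnd k)) with he
  have hepos : ∀ k, 0 < e k := by
    intro k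
    have := hedge k
    simp only [he, hf]
    linarith
  set F : Fin p → ℝ := fun l =>
        (1 / αhi l + ν c + ν (G.otherEnd c l)
          - (((G.incident c).card : ℝ) - 1) * |ν c|
          - (((G.incident (G.otherEnd c l)).card : ℝ) - 1) * |ν (G.otherEnd c l)|)
        / |ν c| with hF
  have hFe : ∀ k ∈ G.incident c, F k = e k / |ν c| := by
    intro k hk
    simp only [OGraph.incident, Finset.mem_filter, Finset.mem_univ, true_and] at hk
    simp only [hF, he, hf, OGraph.otherEnd]
    congr 1
    by_cases h : G.pEnd k = c
    · rw [if_pos h, h]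
      ring
    · rw [if_neg h, hk.resolve_left h]
      ring
  have hfin : (F '' ↑(G.incident c)).Finite := (Finset.finite_toSet _).image _
  have hγmem : γ ∈ F '' ↑(G.incident c) := by
    rw [hγ]
    exact Set.Nonempty.csInf_mem (Set.Nonempty.image _ hcne) hfin
  have hγle : ∀ k ∈ G.incident c, γ * |ν c| ≤ e k := by
    intro k hk
    have h1 : γ ≤ F k := by
      rw [hγ]
      exact csInf_le hfin.bddBelow (Set.mem_image_of_mem _ hk)
    rw [hFe k hk, le_div_iff₀ hνc'] at h1
    exact h1
  have hγpos : 0 < γ := by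
    obtain ⟨k, hk, hk'⟩ := hγmem
    rw [← hk', hFe k hk]
    exact div_pos (hepos k) hνc'
  set S : ℝ := 1 / αnewhi + νnew + ν c with hS
  set r : ℝ := ((G.incident c).card : ℝ) with hr
  have hrpos : 0 < r := by
    rw [hr]
    exact_mod_cast hcne.card_pos
  have hrν : 0 < r * |ν c| := mul_pos hrpos hνc'
  have hSpos : 0 < S := by
    by_contra h
    have := mul_nonpos_of_nonneg_of_nonpos hγpos.le (not_lt.1 h)
    linarith
  obtain ⟨g, hg1, hg2⟩ : ∃ g, r * |ν c| / S < g ∧ g < γ := by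
    apply exists_between
    rw [div_lt_iff₀ hSpos]
    linarith
  have hg : 0 < g := lt_trans (by positivity) hg1
  have hnew : 0 < S - r * |ν c| / g := by
    rw [div_lt_iff₀ hSpos] at hg1
    rw [sub_pos, div_lt_iff₀ hg]
    linarith
  set m : Fin p → ℝ := fun k => e k - if k ∈ G.incident c then |ν c| * g else 0 with hm
  have hmpos : ∀ k, 0 < m k := by
    intro k
    simp only [hm]
    split_ifs with h
    · have := hγle k h
      nlinarith
    · simpa using hepos k
  obtain ⟨ε₁, hε₁, hε₁m⟩ := exists_pos_lower m hmpos
  refine ⟨min ε₁ (S - r * |ν c| / g), lt_min hε₁ hnew, ?_⟩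
  intro v
  set x := v (Fin.last p) with hx
  set w : Fin p → ℝ := fun k => v k.castSucc with hw
  set A : Fin n → ℝ := fun i => (G.incMatrix.mulVec w) i with hA
  have hnode : ∀ i, f i * ∑ k ∈ G.incident i, w k ^ 2 ≤ ν i * A i ^ 2 := by
    intro i
    have := node_bound (G.incident i) (fun k => G.incMatrix i k * w k) (ν i)
    rw [incMatrix_mul_sq, ← incMatrix_mulVec] at this
    exact this
  have hcross : 2 * ν c * A c * x
      ≤ |ν c| * (g * ∑ k ∈ G.incident c, w k ^ 2) + r * |ν c| / g * x ^ 2 := by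
    have := cross_bound (G.incident c) (fun k => G.incMatrix c k * w k) (ν c) x g hg
    rw [incMatrix_mul_sq, ← incMatrix_mulVec] at this
    exact this
  have hsum := sum_incident G f (fun k => w k ^ 2)
  have hsum' : ∑ i, f i * ∑ k ∈ G.incident i, w k ^ 2 ≤ ∑ i, ν i * A i ^ 2 :=
    Finset.sum_le_sum fun i _ => hnode i
  have hquad : ∑ i, ν i * (A i - if i = c then x else 0) ^ 2
      = ∑ i, ν i * A i ^ 2 - 2 * ν c * A c * x + ν c * x ^ 2 := by
    have h1 : ∀ i, ν i * (A i - if i = c then x else 0) ^ 2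
        = ν i * A i ^ 2 + if i = c then (- 2 * ν i * A i * x + ν i * x ^ 2) else 0 := by
      intro i
      split_ifs <;> ring
    simp_rw [h1]
    rw [Finset.sum_add_distrib]
    simp
    ring
  have hmsum : ∑ k, m k * w k ^ 2
      = ∑ k, w k ^ 2 / αhi k + ∑ k, (f (G.pEnd k) + f (G.nEnd k)) * w k ^ 2
        - |ν c| * (g * ∑ k ∈ G.incident c, w k ^ 2) := by
    have h2 : |ν c| * (g * ∑ k ∈ G.incident c, w k ^ 2)
        = ∑ k, (if k ∈ G.incident c then |ν c| * g else 0) * w k ^ 2 := by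
      rw [← mul_assoc, Finset.mul_sum]
      simp_rw [ite_mul, zero_mul]
      rw [← Finset.sum_filter]
      simp
    rw [h2, ← Finset.sum_add_distrib, ← Finset.sum_sub_distrib]
    apply Finset.sum_congr rfl
    intro k _
    simp only [hm, he]
    ring
  have hlow : min ε₁ (S - r * |ν c| / g) * ∑ k, w k ^ 2 ≤ ∑ k, m k * w k ^ 2 := by
    rw [Finset.mul_sum]
    exact Finset.sum_le_sum fun k _ =>
      mul_le_mul_of_nonneg_right ((min_le_left _ _).trans (hε₁m k)) (sq_nonneg _)
  have hlow' : min ε₁ (S - r * |ν c| / g) * x ^ 2 ≤ (S - r * |ν c| / g) * x ^ 2 :=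
    mul_le_mul_of_nonneg_right (min_le_right _ _) (sq_nonneg _)
  rw [Fin.sum_univ_castSucc, Fin.sum_univ_castSucc, Fin.sum_univ_castSucc]
  simp only [Fin.snoc_castSucc, Fin.snoc_last, aug_mulVec_castSucc, aug_mulVec_last]
  rw [mul_add]
  change _ * ∑ k, w k ^ 2 + _ * x ^ 2 ≤ ∑ k, w k ^ 2 / αhi k + x ^ 2 / αnewhi
    + (∑ i, ν i * (A i - if i = c then x else 0) ^ 2 + νnew * x ^ 2)
  rw [hquad]
  have h3 : S * x ^ 2 = x ^ 2 / αnewhi + νnew * x ^ 2 + ν c * x ^ 2 := by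
    rw [hS]
    ring
  linarith

/-! ### From coercivity to the integral estimate -/

/-- A sector-bounded function is dominated by its own energy `φ x * x`, and its graph stays
between the two lines. -/
lemma sector_bounds {φ : ℝ → ℝ} {a b : ℝ} (ha : 0 < a) (h0 : φ 0 = 0)
    (hs : ∀ x : ℝ, x ≠ 0 → a ≤ φ x / x ∧ φ x / x ≤ b) (x : ℝ) :
    φ x ^ 2 / b ≤ φ x * x ∧ x ^ 2 ≤ (1 / a ^ 2) * φ x ^ 2 ∧ |φ x| ≤ b * |x| := by
  by_cases hx : x = 0
  · subst hx
    simp [h0]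
  · obtain ⟨h1, h2⟩ := hs x hx
    set q := φ x / x with hq
    have hφ : φ x = q * x := by
      rw [hq]
      field_simp
    have hq0 : 0 < q := ha.trans_le h1
    have hb : 0 < b := hq0.trans_le h2
    rw [hφ]
    refine ⟨?_, ?_, ?_⟩
    · rw [div_le_iff₀ hb]
      have : q * (q * x ^ 2) ≤ b * (q * x ^ 2) :=
        mul_le_mul_of_nonneg_right h2 (by positivity)
      nlinarith
    · rw [div_mul_eq_mul_div, le_div_iff₀ (by positivity)]
      have : a ^ 2 ≤ q ^ 2 := by gcongr
      nlinarith [sq_nonneg x]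
    · rw [abs_mul, abs_of_pos hq0]
      gcongr

/-- Consensus for an arbitrary matrix `D`, given coercivity of the quadratic form
`∑ v_k² / b_k + ∑ ν_i (D v)_i²`. -/
lemma consensus_of_coercive {N P : Type*} [Fintype N] [Fintype P] (D : Matrix N P ℝ)
    (φ : P → ℝ → ℝ) (hφm : ∀ k, Measurable (φ k)) (a b : P → ℝ) (ha : ∀ k, 0 < a k)
    (h0 : ∀ k, φ k 0 = 0)
    (hs : ∀ k, ∀ x : ℝ, x ≠ 0 → a k ≤ φ k x / x ∧ φ k x / x ≤ b k)
    (ν : N → ℝ)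
    (hco : ∃ ε > 0, ∀ v : P → ℝ,
      ε * ∑ k, v k ^ 2 ≤ ∑ k, v k ^ 2 / b k + ∑ i, ν i * (D.mulVec v) i ^ 2)
    (Y W : ℝ → N → ℝ)
    (hYm : ∀ i, Measurable fun t => Y t i) (hWm : ∀ i, Measurable fun t => W t i)
    (hY2 : ∀ i, ∀ T : ℝ, 0 ≤ T → IntegrableOn (fun t => (Y t i) ^ 2) (Set.Ioc 0 T))
    (hW2 : ∀ i, ∀ T : ℝ, 0 ≤ T → IntegrableOn (fun t => (W t i) ^ 2) (Set.Ioc 0 T))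
    (V : ℝ → P → ℝ)
    (hV : ∀ t k, V t k = φ k (Dᵀ.mulVec (fun i => Y t i + W t i) k))
    (U : ℝ → N → ℝ) (hU : ∀ t, U t = -(D.mulVec (V t)))
    (δ : N → ℝ)
    (hIFP : ∀ i, ∀ T : ℝ, 0 ≤ T →
      ν i * (∫ t in (0:ℝ)..T, (U t i) ^ 2) + δ i ≤ ∫ t in (0:ℝ)..T, U t i * Y t i) :
    ∃ ρ > (0:ℝ), ∃ σ ≥ (0:ℝ), ∀ T : ℝ, 0 ≤ T →
      normT (fun t => Dᵀ.mulVec (Y t)) T ≤ ρ * normT (fun t => Dᵀ.mulVec (W t)) T + σ := by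
  obtain ⟨ε, hε, hco⟩ := hco
  set z : ℝ → P → ℝ := fun t => Dᵀ.mulVec (fun i => Y t i + W t i) with hz
  set d : ℝ → P → ℝ := fun t => Dᵀ.mulVec (W t) with hd
  set s : ℝ → P → ℝ := fun t => Dᵀ.mulVec (Y t) with hsdef
  have hzs : ∀ t k, z t k = s t k + d t k := by
    intro t k
    have : (fun i => Y t i + W t i) = Y t + W t := rfl
    simp only [hz, hd, hsdef, this, Matrix.mulVec_add, Pi.add_apply]
  have hsb := fun t k => sector_bounds (ha k) (h0 k) (hs k) (z t k)
  obtain ⟨C, hC0, hCk⟩ : ∃ C : ℝ, 0 ≤ C ∧ ∀ k, 1 / a k ^ 2 ≤ C :=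
    ⟨∑ k, 1 / a k ^ 2, Finset.sum_nonneg fun k _ => by positivity, fun k =>
      Finset.single_le_sum (f := fun k => 1 / a k ^ 2) (fun k _ => by positivity)
        (Finset.mem_univ k)⟩
  have hUY : ∀ t, ∑ i, U t i * Y t i = - ∑ k, V t k * s t k := by
    intro t
    have h1 : U t ⬝ᵥ Y t = -(V t ⬝ᵥ s t) := by
      simp only [hsdef]
      rw [hU, neg_dotProduct, Matrix.mulVec_transpose, dotProduct_comm (V t),
        ← Matrix.dotProduct_mulVec, dotProduct_comm]
    exact h1
  have hUsq : ∀ t i, U t i ^ 2 = (D.mulVec (V t)) i ^ 2 := by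
    intro t i
    rw [hU, Pi.neg_apply, neg_sq]
  -- Summing the supply rates over the nodes turns them into an energy balance on the edges.
  have key1 : ∀ t, ε * ∑ k, V t k ^ 2 + ∑ i, (U t i * Y t i - ν i * U t i ^ 2)
      ≤ ∑ k, V t k * d t k := by
    intro t
    have h1 := hco (V t)
    have h2 : ∑ k, V t k ^ 2 / b k ≤ ∑ k, V t k * z t k :=
      Finset.sum_le_sum fun k _ => by
        rw [hV]
        exact (hsb t k).1
    have h3 : ∑ k, V t k * z t k = ∑ k, V t k * s t k + ∑ k, V t k * d t k := by
      rw [← Finset.sum_add_distrib]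
      exact Finset.sum_congr rfl fun k _ => by rw [hzs]; ring
    rw [Finset.sum_sub_distrib, hUY]
    simp_rw [hUsq]
    linarith
  have key2 : ∀ t, ∑ k, V t k * d t k
      ≤ ε / 2 * ∑ k, V t k ^ 2 + 1 / (2 * ε) * ∑ k, d t k ^ 2 := by
    intro t
    rw [Finset.mul_sum, Finset.mul_sum, ← Finset.sum_add_distrib]
    apply Finset.sum_le_sum
    intro k _
    have h1 : ε / 2 * V t k ^ 2 + 1 / (2 * ε) * d t k ^ 2 - V t k * d t k
        = (ε * V t k - d t k) ^ 2 / (2 * ε) := by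
      field_simp
      ring
    have h2 : 0 ≤ (ε * V t k - d t k) ^ 2 / (2 * ε) := by positivity
    linarith
  have key3 : ∀ t, ∑ k, s t k ^ 2 ≤ 2 * C * ∑ k, V t k ^ 2 + 2 * ∑ k, d t k ^ 2 := by
    intro t
    rw [Finset.mul_sum, Finset.mul_sum, ← Finset.sum_add_distrib]
    apply Finset.sum_le_sum
    intro k _
    have h1 : z t k ^ 2 ≤ C * V t k ^ 2 := by
      rw [hV]
      exact (hsb t k).2.1.trans (mul_le_mul_of_nonneg_right (hCk k) (sq_nonneg _))
    have h2 : s t k = z t k - d t k := by rw [hzs]; ring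
    rw [h2]
    nlinarith [sq_nonneg (z t k + d t k)]
  set K : ℝ := 2 * C * (2 / ε) with hK
  have hK0 : 0 ≤ K := by positivity
  set A : ℝ := K * (1 / (2 * ε)) + 2 with hA
  have hA0 : 0 < A := by positivity
  have key : ∀ t, ∑ k, s t k ^ 2
      ≤ A * ∑ k, d t k ^ 2 - K * ∑ i, (U t i * Y t i - ν i * U t i ^ 2) := by
    intro t
    have h1 : ε / 2 * ∑ k, V t k ^ 2
        ≤ 1 / (2 * ε) * ∑ k, d t k ^ 2 - ∑ i, (U t i * Y t i - ν i * U t i ^ 2) := by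
      have := key1 t
      have := key2 t
      linarith
    have h2 := mul_le_mul_of_nonneg_left h1 hK0
    have h3 : K * (ε / 2 * ∑ k, V t k ^ 2) = 2 * C * ∑ k, V t k ^ 2 := by
      rw [hK]
      field_simp
    have h4 := key3 t
    rw [hA]
    linarith
  set B : ℝ := K * ∑ i, |δ i| with hB
  have hB0 : 0 ≤ B := mul_nonneg hK0 (Finset.sum_nonneg fun i _ => abs_nonneg _)
  refine ⟨√A, Real.sqrt_pos.2 hA0, √B, Real.sqrt_nonneg _, ?_⟩
  intro T hT
  set μ := (volume : Measure ℝ).restrict (Set.Ioc 0 T) with hμ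
  have hYL : ∀ i, MemLp (fun t => Y t i) 2 μ := fun i =>
    (memLp_two_iff_integrable_sq (hYm i).aestronglyMeasurable).2 (hY2 i T hT)
  have hWL : ∀ i, MemLp (fun t => W t i) 2 μ := fun i =>
    (memLp_two_iff_integrable_sq (hWm i).aestronglyMeasurable).2 (hW2 i T hT)
  have hsL : ∀ k, MemLp (fun t => s t k) 2 μ := fun k => by
    simp only [hsdef, Matrix.mulVec, dotProduct]
    exact memLp_finsetSum _ fun i _ => (hYL i).const_mul _
  have hdL : ∀ k, MemLp (fun t => d t k) 2 μ := fun k => by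
    simp only [hd, Matrix.mulVec, dotProduct]
    exact memLp_finsetSum _ fun i _ => (hWL i).const_mul _
  have hzL : ∀ k, MemLp (fun t => z t k) 2 μ := fun k => by
    simp_rw [hzs]
    exact (hsL k).add (hdL k)
  have hzm : ∀ k, Measurable fun t => z t k := fun k => by
    simp only [hz, Matrix.mulVec, dotProduct]
    exact Finset.measurable_sum _ fun i _ => ((hYm i).add (hWm i)).const_mul _
  have hVL : ∀ k, MemLp (fun t => V t k) 2 μ := fun k => by
    simp_rw [hV]
    refine MemLp.of_le_mul (c := b k) (hzL k)
      ((hφm k).comp (hzm k)).aestronglyMeasurable (Filter.Eventually.of_forall fun t => ?_)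
    exact (hsb t k).2.2
  have hUL : ∀ i, MemLp (fun t => U t i) 2 μ := fun i => by
    simp only [hU, Pi.neg_apply, Matrix.mulVec, dotProduct]
    exact (memLp_finsetSum _ fun k _ => (hVL k).const_mul _).neg
  have hs2 : Integrable (fun t => ∑ k, s t k ^ 2) μ :=
    integrable_finsetSum _ fun k _ => (hsL k).integrable_sq
  have hd2 : Integrable (fun t => ∑ k, d t k ^ 2) μ :=
    integrable_finsetSum _ fun k _ => (hdL k).integrable_sq
  have hU2 : ∀ i, Integrable (fun t => U t i ^ 2) μ := fun i => (hUL i).integrable_sq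
  have hUYi : ∀ i, Integrable (fun t => U t i * Y t i) μ := fun i =>
    (hUL i).integrable_mul (hYL i)
  have hsup : ∀ i, Integrable (fun t => U t i * Y t i - ν i * U t i ^ 2) μ := fun i =>
    (hUYi i).sub ((hU2 i).const_mul _)
  have hsupint : -∑ i, |δ i| ≤ ∫ t, ∑ i, (U t i * Y t i - ν i * U t i ^ 2) ∂μ := by
    rw [integral_finsetSum _ fun i _ => hsup i, ← Finset.sum_neg_distrib]
    apply Finset.sum_le_sum
    intro i _
    rw [integral_sub (hUYi i) ((hU2 i).const_mul _), integral_const_mul]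
    have h1 := hIFP i T hT
    rw [intervalIntegral.integral_of_le hT, intervalIntegral.integral_of_le hT] at h1
    have := neg_abs_le (δ i)
    linarith
  have hfinal : ∫ t, ∑ k, s t k ^ 2 ∂μ ≤ A * ∫ t, ∑ k, d t k ^ 2 ∂μ + B := by
    have hsupI := integrable_finsetSum Finset.univ fun i _ => hsup i
    have h1 : ∫ t, ∑ k, s t k ^ 2 ∂μ
        ≤ ∫ t, (A * ∑ k, d t k ^ 2 - K * ∑ i, (U t i * Y t i - ν i * U t i ^ 2)) ∂μ :=
      integral_mono hs2 ((hd2.const_mul _).sub (hsupI.const_mul _)) key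
    rw [integral_sub (hd2.const_mul _) (hsupI.const_mul _), integral_const_mul,
      integral_const_mul] at h1
    have h2 := mul_le_mul_of_nonneg_left hsupint hK0
    rw [hB]
    linarith
  have hI0 : 0 ≤ ∫ t, ∑ k, d t k ^ 2 ∂μ :=
    integral_nonneg fun t => Finset.sum_nonneg fun k _ => sq_nonneg _
  simp only [normT]
  rw [intervalIntegral.integral_of_le hT, intervalIntegral.integral_of_le hT,
    ← Real.sqrt_mul hA0.le]
  refine (Real.sqrt_le_sqrt hfinal).trans ?_
  have hAI := mul_nonneg hA0.le hI0
  refine Real.sqrt_le_iff.2 ⟨by positivity, ?_⟩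
  nlinarith [Real.sq_sqrt hAI, Real.sq_sqrt hB0,
    mul_nonneg (Real.sqrt_nonneg (A * ∫ t, ∑ k, d t k ^ 2 ∂μ)) (Real.sqrt_nonneg B)]

/-- Theorem 1: when a new IFP node `n+1` is joined to node `c` of a network
satisfying the edge conditions, through a sector-bounded coupling satisfying the interface
condition, the augmented network achieves input–output consensus. -/
theorem stmt10 {n p : ℕ} (G : OGraph (Fin n) (Fin p))
    (hconn : G.toSimpleGraph.Connected)
    (φ : Fin p → ℝ → ℝ) (hφm : ∀ k, Measurable (φ k))
    (αlo αhi : Fin p → ℝ) (hαlo : ∀ k, 0 < αlo k) (hle : ∀ k, αlo k ≤ αhi k)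
    (hφ0 : ∀ k, φ k 0 = 0)
    (hsec : ∀ k, ∀ x : ℝ, x ≠ 0 → αlo k ≤ φ k x / x ∧ φ k x / x ≤ αhi k)
    (ν : Fin n → ℝ) (νnew : ℝ)
    (hedge : ∀ k : Fin p,
      0 < 1 / αhi k + ν (G.pEnd k) + ν (G.nEnd k)
        - (((G.incident (G.pEnd k)).card : ℝ) - 1) * |ν (G.pEnd k)|
        - (((G.incident (G.nEnd k)).card : ℝ) - 1) * |ν (G.nEnd k)|)
    (c : Fin n) (hνc : ν c ≠ 0) (hcne : (G.incident c).Nonempty)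
    (φnew : ℝ → ℝ) (hφnewm : Measurable φnew) (hφnew0 : φnew 0 = 0)
    (αnewlo αnewhi : ℝ) (hαnewlo : 0 < αnewlo) (hnewle : αnewlo ≤ αnewhi)
    (hsecnew : ∀ x : ℝ, x ≠ 0 → αnewlo ≤ φnew x / x ∧ φnew x / x ≤ αnewhi)
    (γ : ℝ)
    (hγ : γ = sInf ((fun l =>
        (1 / αhi l + ν c + ν (G.otherEnd c l)
          - (((G.incident c).card : ℝ) - 1) * |ν c|
          - (((G.incident (G.otherEnd c l)).card : ℝ) - 1) * |ν (G.otherEnd c l)|)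
        / |ν c|) '' ↑(G.incident c)))
    (hint : 0 < γ * (1 / αnewhi + νnew + ν c) - ((G.incident c).card : ℝ) * |ν c|)
    (Ynew Wnew : ℝ → Fin (n + 1) → ℝ)
    (hYm : ∀ i, Measurable fun t => Ynew t i) (hWm : ∀ i, Measurable fun t => Wnew t i)
    (hY2 : ∀ i, ∀ T : ℝ, 0 ≤ T → IntegrableOn (fun t => (Ynew t i) ^ 2) (Set.Ioc 0 T))
    (hW2 : ∀ i, ∀ T : ℝ, 0 ≤ T → IntegrableOn (fun t => (Wnew t i) ^ 2) (Set.Ioc 0 T))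
    (Vnew : ℝ → Fin (p + 1) → ℝ)
    (hVnew : ∀ t k, Vnew t k = (Fin.snoc φ φnew : Fin (p + 1) → ℝ → ℝ) k
        ((augIncMatrix G c)ᵀ.mulVec (fun i => Ynew t i + Wnew t i) k))
    (Unew : ℝ → Fin (n + 1) → ℝ)
    (hUnew : ∀ t, Unew t = -((augIncMatrix G c).mulVec (Vnew t)))
    (δ : Fin (n + 1) → ℝ)
    (hIFP : ∀ i : Fin (n + 1), ∀ T : ℝ, 0 ≤ T →
      (Fin.snoc ν νnew : Fin (n + 1) → ℝ) i * (∫ t in (0:ℝ)..T, (Unew t i) ^ 2) + δ i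
        ≤ ∫ t in (0:ℝ)..T, Unew t i * Ynew t i) :
    ∃ ρ > (0:ℝ), ∃ σ ≥ (0:ℝ), ∀ T : ℝ, 0 ≤ T →
      normT (fun t => (augIncMatrix G c)ᵀ.mulVec (Ynew t)) T
        ≤ ρ * normT (fun t => (augIncMatrix G c)ᵀ.mulVec (Wnew t)) T + σ := by
  have h := consensus_of_coercive (augIncMatrix G c)
    (Fin.snoc φ φnew : Fin (p + 1) → ℝ → ℝ) ?_
    (Fin.snoc αlo αnewlo : Fin (p + 1) → ℝ) (Fin.snoc αhi αnewhi : Fin (p + 1) → ℝ)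
    ?_ ?_ ?_ (Fin.snoc ν νnew : Fin (n + 1) → ℝ)
    (aug_coercive G αhi ν νnew hedge c hνc hcne αnewhi γ hγ hint)
    Ynew Wnew hYm hWm hY2 hW2 Vnew hVnew Unew hUnew δ hIFP
  · exact h
  all_goals
    intro k
    refine Fin.lastCases ?_ (fun j => ?_) k
    · simp only [Fin.snoc_last]
      assumption
    · simp only [Fin.snoc_castSucc]
      apply_assumption
end

section
/- Let G₁ be a finite simple undirected connected graph on node set {1,…,n} and G₂ a finite simple undirected connected graph on node set {n+1,…,m}, each with at least one edge, with oriented incidence matrices D₁ and D₂. Let E₁₂ be a nonempty set of interconnection edges, each joining a node p of G₁ (positive end) to a node q of G₂ (negative end), such that for any two distinct interconnection edges (p_r,q_r), (p_s,q_s): p_r ≠ p_s, q_r ≠ q_s, p_r and p_s are non-adjacent in G₁, and q_r and q_s are non-adjacent in G₂. Let ν₁,…,ν_m ∈ ℝ, let each edge of G₁, G₂ and E₁₂ carry a constant ᾱ > 0 (written ᾱ_{ij} for the edge joining i and j), and suppose: (i) for every edge (i,j) of G₁ or of G₂: 1/ᾱ_{ij} + ν_i + ν_j − (r_i − 1)|ν_i|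 − (r_j − 1)|ν_j| > 0, where r_i is the degree of node i within its own subnetwork; (ii) every boundary node p (an endpoint of an interconnection edge) satisfies ν_p ≠ 0 and has at least one neighbour in its own subnetwork; (iii) for every interconnection edge (p,q) ∈ E₁₂: γ_{pq}(1/ᾱ_{pq} + ν_p + ν_q) − r_p|ν_p| − r_q|ν_q| > 0, where γ_{pq} = min{γ_p, γ_q}, γ_p := min over neighbours j of p in G₁ of [1/ᾱ_{pj} + ν_p + ν_j − (r_p − 1)|ν_p| − (r_j − 1)|ν_j|]/|ν_p|, and γ_q := min over neighbours j of q in G₂ of [1/ᾱ_{qj} + ν_q + ν_j − (r_q − 1)|ν_q| − (r_j − 1)|ν_j|]/|ν_q|. Let D₁₂ be an oriented incidence matrix of the interconnected graph G₁₂ = (V(G₁)∪V(G₂), E(G₁)∪E(G₂)∪E₁₂), let Ψ₁₂ = diag(ν₁,…,ν_m), and let Λ₁₂ be the diagonal matrix indexed by the edges of G₁₂ whose entry at each edge (i,j) is 1/ᾱ_{ij}. Then D₁₂ᵀ Ψ₁₂ D₁₂ + Λ₁₂ is positive definite. -/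
/-!
The matrix `D₁₂ᵀ Ψ₁₂ D₁₂ + Λ₁₂` is strictly diagonally dominant after a positive scaling of its
columns. Its diagonal entry at an edge `(i, j)` is `1 / α + ν i + ν j`, and each further edge
meeting `(i, j)` at `i` contributes an off-diagonal entry `± ν i`. Edges inside the subnetworks get
scaling `1`, and the interconnection edge `k` gets `δ k`, slightly smaller than
`min (γp k) (γq k)`.

* Row of an internal edge: as boundary nodes are pairwise non-adjacent, at most one
  interconnection edge `k` enters, with weight `δ k * |ν p|`; this is less than `γ * |ν p|`, which
  by definition of `γ` is at most the margin of the edge (`edge_dom`).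
* Row of an interconnection edge: dominance is the interface condition with `δ k` in place of
  `min (γp k) (γq k)`; it survives a small enough decrease. As boundary nodes are distinct, no other
  interconnection edge enters.

That scaled dominance implies positivity of the quadratic form is proved node by node
(`node_bound`, `posDef_of_scaled`).
-/

open Matrix

/-- Adjacency of two nodes: some edge joins them. -/
def OGraph.Adj {V E : Type*} (G : OGraph V E) (i j : V) : Prop :=
  ∃ e, (G.pEnd e = i ∧ G.nEnd e = j) ∨ (G.pEnd e = j ∧ G.nEnd e = i)

/-- The oriented incidence matrix of the graph `G₁₂` obtained by interconnecting `G₁` and `G₂`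
through `q` interconnection edges: edge `k` of the interconnection joins node `pe k` of `G₁`
(positive end) to node `qe k` of `G₂` (negative end). -/
noncomputable def interIncMatrix {n₁ p₁ n₂ p₂ q : ℕ}
    (G₁ : OGraph (Fin n₁) (Fin p₁)) (G₂ : OGraph (Fin n₂) (Fin p₂))
    (pe : Fin q → Fin n₁) (qe : Fin q → Fin n₂) :
    Matrix (Fin n₁ ⊕ Fin n₂) (Fin p₁ ⊕ (Fin p₂ ⊕ Fin q)) ℝ :=
  Matrix.of fun i k =>
    match i, k with
    | .inl i, .inl k => G₁.incMatrix i k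
    | .inl _, .inr (.inl _) => 0
    | .inl i, .inr (.inr k) => if pe k = i then 1 else 0
    | .inr _, .inl _ => 0
    | .inr i, .inr (.inl k) => G₂.incMatrix i k
    | .inr i, .inr (.inr k) => if qe k = i then -1 else 0

/-- The contribution of a single node. Here `a` is the row of the incidence matrix at a node of
weight `ν` and `d` is a positive scaling of the edges. Expanding the square, each off-diagonal
product is bounded by `|x e| * |x f| ≤ (d f / d e * x e ^ 2 + d e / d f * x f ^ 2) / 2`. -/
lemma node_bound_s11 {E : Type*} [Fintype E] (a x d : E → ℝ) (ν : ℝ)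
    (ha : ∀ e, a e = 0 ∨ a e = 1 ∨ a e = -1) (hd : ∀ e, 0 < d e) :
    ∑ e, x e ^ 2 * (a e ^ 2 * (ν + |ν| - |ν| * (∑ f, a f ^ 2 * d f) / d e))
      ≤ ν * (∑ e, a e * x e) ^ 2 := by
  classical
  -- the summand, over ordered pairs of edges, of right-hand side minus left-hand side
  let T : E → E → ℝ := fun e f =>
    ν * (a e * x e * (a f * x f)) + |ν| * (x e ^ 2 * a e ^ 2 * (a f ^ 2 * d f / d e))
      - if e = f then (ν + |ν|) * (x e ^ 2 * a e ^ 2) else 0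
  have hT : ν * (∑ e, a e * x e) ^ 2
      - ∑ e, x e ^ 2 * (a e ^ 2 * (ν + |ν| - |ν| * (∑ f, a f ^ 2 * d f) / d e))
      = ∑ e, ∑ f, T e f := by
    simp only [T, Finset.sum_sub_distrib, Finset.sum_add_distrib, Finset.sum_ite_eq,
      Finset.mem_univ, if_true]
    rw [sq, Finset.sum_mul_sum]
    simp only [← Finset.mul_sum]
    simp only [← Finset.sum_div]
    rw [add_sub_assoc, sub_eq_add_neg, ← Finset.sum_neg_distrib]
    congr 1
    rw [Finset.mul_sum Finset.univ (fun e => x e ^ 2 * a e ^ 2),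
      Finset.mul_sum Finset.univ (fun e => x e ^ 2 * a e ^ 2 * _), ← Finset.sum_sub_distrib]
    refine Finset.sum_congr rfl fun e _ => ?_
    ring
  have hsymm : 0 ≤ ∑ e, ∑ f, (T e f + T f e) := by
    refine Finset.sum_nonneg fun e _ => Finset.sum_nonneg fun f _ => ?_
    by_cases hef : e = f
    · subst hef
      have h1 : d e / d e = 1 := div_self (hd e).ne'
      apply le_of_eq
      simp only [T, if_true, mul_div_assoc, h1]
      rcases ha e with h | h | h <;> rw [h] <;> ring
    · have hfe : f ≠ e := fun h => hef h.symm
      simp only [T, hef, hfe, if_false, sub_zero]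
      have hde := hd e
      have hdf := hd f
      set u := a e * x e
      set v := a f * x f
      have hkey : ν * (u * v) + |ν| * (x e ^ 2 * a e ^ 2 * (a f ^ 2 * d f / d e))
          + (ν * (v * u) + |ν| * (x f ^ 2 * a f ^ 2 * (a e ^ 2 * d e / d f)))
          = 2 * (ν * (u * v)) + |ν| * ((a f ^ 2 * (u * d f)) ^ 2
            + (a e ^ 2 * (v * d e)) ^ 2) / (d e * d f) := by
        field_simp
        rcases ha e with h | h | h <;> rcases ha f with h' | h' | h' <;>
          simp only [u, v, h, h'] <;> ring
      have hpair : 2 * |u * v| ≤ ((a f ^ 2 * (u * d f)) ^ 2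
            + (a e ^ 2 * (v * d e)) ^ 2) / (d e * d f) := by
        have h0 : a e ^ 2 * v * u = v * u := by
          rcases ha e with h | h | h <;> simp [u, h]
        have h1 : a f ^ 2 * u * v = u * v := by
          rcases ha f with h | h | h <;> simp [v, h]
        have h2 : 2 * (|a f ^ 2 * (u * d f)| * |a e ^ 2 * (v * d e)|)
            ≤ (a f ^ 2 * (u * d f)) ^ 2 + (a e ^ 2 * (v * d e)) ^ 2 := by
          have := two_mul_le_add_sq (|a f ^ 2 * (u * d f)|) (|a e ^ 2 * (v * d e)|)
          rw [sq_abs, sq_abs] at this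
          linarith
        rw [le_div_iff₀ (by positivity)]
        refine le_trans (le_of_eq ?_) h2
        rw [← abs_mul]
        have h3 : a f ^ 2 * (u * d f) * (a e ^ 2 * (v * d e)) = u * v * (d e * d f) := by
          calc _ = (a f ^ 2 * u * (a e ^ 2 * v)) * (d e * d f) := by ring
            _ = _ := by
              congr 1
              calc a f ^ 2 * u * (a e ^ 2 * v) = a f ^ 2 * (a e ^ 2 * v * u) := by ring
                _ = u * v := by rw [h0]; linarith
        rw [h3, abs_mul (u * v) (d e * d f), abs_of_pos (mul_pos hde hdf)]
        ring
      rw [hkey, mul_div_assoc]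
      have h4 : |ν| * (2 * |u * v|) ≤ |ν| * (((a f ^ 2 * (u * d f)) ^ 2
            + (a e ^ 2 * (v * d e)) ^ 2) / (d e * d f)) :=
        mul_le_mul_of_nonneg_left hpair (abs_nonneg _)
      have h5 := neg_abs_le (ν * (u * v))
      rw [abs_mul] at h5
      linarith
  have hsum : ∑ e, ∑ f, (T e f + T f e) = 2 * ∑ e, ∑ f, T e f := by
    simp only [Finset.sum_add_distrib]
    rw [Finset.sum_comm (f := fun e f => T f e)]
    ring
  linarith

/-- Scaled diagonal dominance, with the off-diagonal part of each row organised by nodes: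
`d` are the positive scaling factors of the edges. -/
lemma posDef_of_scaled {V E : Type*} [Fintype V] [Fintype E] [DecidableEq V] [DecidableEq E]
    (D : Matrix V E ℝ) (ν : V → ℝ) (w d : E → ℝ)
    (hD : ∀ i e, D i e = 0 ∨ D i e = 1 ∨ D i e = -1) (hd : ∀ e, 0 < d e)
    (hdom : ∀ e, 0 < w e +
      ∑ i, D i e ^ 2 * (ν i + |ν i| - |ν i| * (∑ f, D i f ^ 2 * d f) / d e))
    (x : E → ℝ) (hx : x ≠ 0) :
    0 < x ⬝ᵥ ((Dᵀ * Matrix.diagonal ν * D + Matrix.diagonal w).mulVec x) := by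
  have hform : x ⬝ᵥ ((Dᵀ * Matrix.diagonal ν * D + Matrix.diagonal w).mulVec x)
      = ∑ i, ν i * (∑ e, D i e * x e) ^ 2 + ∑ e, x e ^ 2 * w e := by
    rw [Matrix.add_mulVec, dotProduct_add, ← Matrix.mulVec_mulVec, ← Matrix.mulVec_mulVec,
      Matrix.dotProduct_mulVec, Matrix.vecMul_transpose]
    congr 1
    · simp only [dotProduct, Matrix.mulVec_diagonal]
      refine Finset.sum_congr rfl fun i _ => ?_
      simp only [Matrix.mulVec, dotProduct]
      ring
    · simp only [dotProduct, Matrix.mulVec_diagonal]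
      refine Finset.sum_congr rfl fun i _ => ?_
      ring
  rw [hform]
  have hnode := Finset.sum_le_sum fun i (_ : i ∈ Finset.univ) =>
    node_bound_s11 (D i) x d (ν i) (hD i) hd
  rw [Finset.sum_comm] at hnode
  refine lt_of_lt_of_le ?_ (add_le_add_left hnode _)
  rw [← Finset.sum_add_distrib]
  obtain ⟨e₀, he₀⟩ := Function.ne_iff.mp hx
  have hterm : ∀ e, ∑ i, x e ^ 2 * (D i e ^ 2 *
      (ν i + |ν i| - |ν i| * (∑ f, D i f ^ 2 * d f) / d e)) + x e ^ 2 * w e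
      = x e ^ 2 * (w e +
      ∑ i, D i e ^ 2 * (ν i + |ν i| - |ν i| * (∑ f, D i f ^ 2 * d f) / d e)) := by
    intro e
    rw [← Finset.mul_sum]
    ring
  simp only [hterm]
  refine Finset.sum_pos' (fun e _ => mul_nonneg (sq_nonneg _) (hdom e).le) ⟨e₀, by simp, ?_⟩
  exact mul_pos (by have : x e₀ ≠ 0 := he₀
                    positivity) (hdom e₀)

lemma OGraph.incMatrix_mem {V E : Type*} [DecidableEq V] (G : OGraph V E) (i : V) (e : E) :
    G.incMatrix i e = 0 ∨ G.incMatrix i e = 1 ∨ G.incMatrix i e = -1 := by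
  simp only [OGraph.incMatrix, Matrix.of_apply]
  split_ifs <;> simp

lemma OGraph.incMatrix_sq {V E : Type*} [DecidableEq V] (G : OGraph V E) (i : V) (e : E) :
    G.incMatrix i e ^ 2 = if G.pEnd e = i ∨ G.nEnd e = i then 1 else 0 := by
  simp only [OGraph.incMatrix, Matrix.of_apply]
  split_ifs <;> simp_all

lemma OGraph.sum_incMatrix_sq {V E : Type*} [DecidableEq V] [Fintype E] (G : OGraph V E)
    (i : V) : ∑ e, G.incMatrix i e ^ 2 = ((G.incident i).card : ℝ) := by
  simp [OGraph.incMatrix_sq, OGraph.incident]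

lemma OGraph.sum_incMatrix_sq_mul {V E : Type*} [DecidableEq V] [Fintype V] (G : OGraph V E)
    (e : E) (g : V → ℝ) :
    ∑ i, G.incMatrix i e ^ 2 * g i = g (G.pEnd e) + g (G.nEnd e) := by
  have h : ∀ i, G.incMatrix i e ^ 2 * g i
      = (if G.pEnd e = i then g i else 0) + (if G.nEnd e = i then g i else 0) := by
    intro i
    have := G.ends_ne e
    rw [OGraph.incMatrix_sq]
    by_cases h1 : G.pEnd e = i <;> by_cases h2 : G.nEnd e = i <;> simp_all
  simp [h, Finset.sum_add_distrib]

/-- The dominance margin of edge `e` in its own subnetwork: the quantity required to be positive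
on every edge, with `w e` in the role of `1 / α`. -/
noncomputable def OGraph.margin {V E : Type*} [DecidableEq V] [Fintype E] (G : OGraph V E)
    (ν : V → ℝ) (w : E → ℝ) (e : E) : ℝ :=
  w e + ν (G.pEnd e) + ν (G.nEnd e)
    - (((G.incident (G.pEnd e)).card : ℝ) - 1) * |ν (G.pEnd e)|
    - (((G.incident (G.nEnd e)).card : ℝ) - 1) * |ν (G.nEnd e)|

/-- The margin is symmetric in the two ends, so it may be written from either of them. -/
lemma OGraph.margin_eq {V E : Type*} [DecidableEq V] [Fintype E] (G : OGraph V E)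
    (ν : V → ℝ) (w : E → ℝ) (i : V) (e : E) (he : e ∈ G.incident i) :
    w e + ν i + ν (G.otherEnd i e) - (((G.incident i).card : ℝ) - 1) * |ν i|
      - (((G.incident (G.otherEnd i e)).card : ℝ) - 1) * |ν (G.otherEnd i e)|
      = G.margin ν w e := by
  have he' : G.pEnd e = i ∨ G.nEnd e = i := by simpa [OGraph.incident] using he
  by_cases h : G.pEnd e = i
  · subst h
    simp [OGraph.otherEnd, OGraph.margin]
  · obtain rfl := he'.resolve_left h
    simp only [OGraph.otherEnd, h, if_false, OGraph.margin]
    ring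

/-- `γ`, the least margin at a boundary node relative to the weight of that node, is positive,
and is a lower bound for those relative margins. -/
lemma gamma_spec {V E : Type*} [DecidableEq V] [Fintype E] (G : OGraph V E)
    (ν : V → ℝ) (w : E → ℝ) (hm : ∀ e, 0 < G.margin ν w e) (i : V) (hi : ν i ≠ 0)
    (hne : (G.incident i).Nonempty) (γ : ℝ)
    (hγ : γ = sInf ((fun l =>
        (w l + ν i + ν (G.otherEnd i l) - (((G.incident i).card : ℝ) - 1) * |ν i|
          - (((G.incident (G.otherEnd i l)).card : ℝ) - 1)
              * |ν (G.otherEnd i l)|) / |ν i|) '' ↑(G.incident i))) :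
    0 < γ ∧ ∀ e ∈ G.incident i, γ * |ν i| ≤ G.margin ν w e := by
  have habs : 0 < |ν i| := abs_pos.mpr hi
  have himg : γ = sInf ((fun l => G.margin ν w l / |ν i|) '' ↑(G.incident i)) := by
    rw [hγ]
    congr 1
    refine Set.image_congr fun l hl => ?_
    rw [G.margin_eq ν w i l hl]
  have hfin : ((fun l => G.margin ν w l / |ν i|) '' (↑(G.incident i) : Set E)).Finite :=
    (G.incident i).finite_toSet.image _
  constructor
  · have hmem := Set.Nonempty.csInf_mem
      (Set.Nonempty.image (fun l => G.margin ν w l / |ν i|) hne) hfin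
    rw [← himg] at hmem
    obtain ⟨l, -, hl⟩ := hmem
    rw [← hl]
    exact div_pos (hm l) habs
  · intro e he
    rw [← le_div_iff₀ habs, himg]
    exact csInf_le hfin.bddBelow ⟨e, he, rfl⟩

/-- Dominance in the row of an edge of a subnetwork: at most one end is a boundary node, so at
most one interconnection edge, with scaling `δ k < γ k`, enters the row. -/
lemma edge_dom {V E : Type*} [DecidableEq V] [Fintype E] (G : OGraph V E)
    (ν : V → ℝ) (w : E → ℝ) (hm : ∀ e, 0 < G.margin ν w e) {q : ℕ} (b : Fin q → V)
    (hb : Function.Injective b) (hadj : ∀ r s, r ≠ s → ¬ G.Adj (b r) (b s))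
    (hν : ∀ k, ν (b k) ≠ 0) (γ δ : Fin q → ℝ) (hδ : ∀ k, δ k < γ k)
    (hγ : ∀ k, ∀ e ∈ G.incident (b k), γ k * |ν (b k)| ≤ G.margin ν w e) (e : E) :
    0 < w e + ((ν (G.pEnd e) + |ν (G.pEnd e)| - |ν (G.pEnd e)| *
          ((G.incident (G.pEnd e)).card + ∑ k, if b k = G.pEnd e then δ k else 0))
        + (ν (G.nEnd e) + |ν (G.nEnd e)| - |ν (G.nEnd e)| *
          ((G.incident (G.nEnd e)).card + ∑ k, if b k = G.nEnd e then δ k else 0))) := by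
  have hsum : ∀ k, (∑ l, if b l = b k then δ l else 0) = δ k := by
    intro k
    simp [hb.eq_iff]
  have hzero : ∀ i, (∀ k, b k ≠ i) → (∑ l, if b l = i then δ l else 0) = 0 := by
    intro i hi
    simp [hi]
  have hmem : ∀ k, G.pEnd e = b k ∨ G.nEnd e = b k → δ k * |ν (b k)| < G.margin ν w e := by
    intro k hk
    refine lt_of_lt_of_le ?_ (hγ k e (by simpa [OGraph.incident] using hk))
    exact mul_lt_mul_of_pos_right (hδ k) (abs_pos.mpr (hν k))
  have hnot : ∀ k l, b k = G.pEnd e → b l ≠ G.nEnd e := by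
    intro k l hk hl
    by_cases hkl : k = l
    · subst hkl
      exact G.ends_ne e (hk.symm.trans hl)
    · exact hadj k l hkl ⟨e, Or.inl ⟨hk.symm, hl.symm⟩⟩
  have hme := hm e
  by_cases hp : ∃ k, b k = G.pEnd e
  · obtain ⟨k, hk⟩ := hp
    have h1 := hmem k (Or.inl hk.symm)
    rw [hzero (G.nEnd e) (fun l => hnot k l hk), ← hk, hsum k]
    simp only [OGraph.margin, ← hk] at h1
    linarith
  · push Not at hp
    rw [hzero (G.pEnd e) hp]
    by_cases hn : ∃ k, b k = G.nEnd e
    · obtain ⟨k, hk⟩ := hn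
      have h1 := hmem k (Or.inr hk.symm)
      rw [← hk, hsum k]
      simp only [OGraph.margin, ← hk] at h1
      linarith
    · push Not at hn
      rw [hzero (G.nEnd e) hn]
      simp only [OGraph.margin] at hme
      linarith

/-- Theorem 2, matrix part: for two connected subnetworks interconnected
through boundary edges with pairwise distinct, pairwise non-adjacent boundary nodes, the edge
conditions within each subnetwork together with the interface conditions on the
interconnection edges imply that `D₁₂ᵀ Ψ₁₂ D₁₂ + Λ₁₂` is positive definite. -/
theorem stmt11 {n₁ p₁ n₂ p₂ q : ℕ}
    (G₁ : OGraph (Fin n₁) (Fin p₁)) (G₂ : OGraph (Fin n₂) (Fin p₂))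
    (hc₁ : G₁.toSimpleGraph.Connected) (hc₂ : G₂.toSimpleGraph.Connected)
    (hp₁ : 0 < p₁) (hp₂ : 0 < p₂) (hq : 0 < q)
    (pe : Fin q → Fin n₁) (qe : Fin q → Fin n₂)
    (hpe : Function.Injective pe) (hqe : Function.Injective qe)
    (hpadj : ∀ r s, r ≠ s → ¬ G₁.Adj (pe r) (pe s))
    (hqadj : ∀ r s, r ≠ s → ¬ G₂.Adj (qe r) (qe s))
    (ν₁ : Fin n₁ → ℝ) (ν₂ : Fin n₂ → ℝ)
    (αhi : Fin p₁ ⊕ (Fin p₂ ⊕ Fin q) → ℝ) (hαhi : ∀ e, 0 < αhi e)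
    (hedge₁ : ∀ k : Fin p₁,
      0 < 1 / αhi (Sum.inl k) + ν₁ (G₁.pEnd k) + ν₁ (G₁.nEnd k)
        - (((G₁.incident (G₁.pEnd k)).card : ℝ) - 1) * |ν₁ (G₁.pEnd k)|
        - (((G₁.incident (G₁.nEnd k)).card : ℝ) - 1) * |ν₁ (G₁.nEnd k)|)
    (hedge₂ : ∀ k : Fin p₂,
      0 < 1 / αhi (Sum.inr (Sum.inl k)) + ν₂ (G₂.pEnd k) + ν₂ (G₂.nEnd k)
        - (((G₂.incident (G₂.pEnd k)).card : ℝ) - 1) * |ν₂ (G₂.pEnd k)|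
        - (((G₂.incident (G₂.nEnd k)).card : ℝ) - 1) * |ν₂ (G₂.nEnd k)|)
    (hbd₁ : ∀ k : Fin q, ν₁ (pe k) ≠ 0 ∧ (G₁.incident (pe k)).Nonempty)
    (hbd₂ : ∀ k : Fin q, ν₂ (qe k) ≠ 0 ∧ (G₂.incident (qe k)).Nonempty)
    (γp γq : Fin q → ℝ)
    (hγp : ∀ k, γp k = sInf ((fun l =>
        (1 / αhi (Sum.inl l) + ν₁ (pe k) + ν₁ (G₁.otherEnd (pe k) l)
          - (((G₁.incident (pe k)).card : ℝ) - 1) * |ν₁ (pe k)|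
          - (((G₁.incident (G₁.otherEnd (pe k) l)).card : ℝ) - 1)
              * |ν₁ (G₁.otherEnd (pe k) l)|) / |ν₁ (pe k)|) '' ↑(G₁.incident (pe k))))
    (hγq : ∀ k, γq k = sInf ((fun l =>
        (1 / αhi (Sum.inr (Sum.inl l)) + ν₂ (qe k) + ν₂ (G₂.otherEnd (qe k) l)
          - (((G₂.incident (qe k)).card : ℝ) - 1) * |ν₂ (qe k)|
          - (((G₂.incident (G₂.otherEnd (qe k) l)).card : ℝ) - 1)
              * |ν₂ (G₂.otherEnd (qe k) l)|) / |ν₂ (qe k)|) '' ↑(G₂.incident (qe k))))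
    (hint : ∀ k : Fin q,
      0 < min (γp k) (γq k) * (1 / αhi (Sum.inr (Sum.inr k)) + ν₁ (pe k) + ν₂ (qe k))
        - ((G₁.incident (pe k)).card : ℝ) * |ν₁ (pe k)|
        - ((G₂.incident (qe k)).card : ℝ) * |ν₂ (qe k)|) :
    ∀ x : Fin p₁ ⊕ (Fin p₂ ⊕ Fin q) → ℝ, x ≠ 0 →
      0 < x ⬝ᵥ (((interIncMatrix G₁ G₂ pe qe)ᵀ * Matrix.diagonal (Sum.elim ν₁ ν₂)
          * interIncMatrix G₁ G₂ pe qe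
          + Matrix.diagonal fun e => 1 / αhi e).mulVec x) := by
  have hm₁ : ∀ e, 0 < G₁.margin ν₁ (fun e => 1 / αhi (Sum.inl e)) e := hedge₁
  have hm₂ : ∀ e, 0 < G₂.margin ν₂ (fun e => 1 / αhi (Sum.inr (Sum.inl e))) e := hedge₂
  have hg₁ := fun k => gamma_spec G₁ ν₁ (fun e => 1 / αhi (Sum.inl e)) hm₁ (pe k)
    (hbd₁ k).1 (hbd₁ k).2 (γp k) (hγp k)
  have hg₂ := fun k => gamma_spec G₂ ν₂ (fun e => 1 / αhi (Sum.inr (Sum.inl e))) hm₂ (qe k)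
    (hbd₂ k).1 (hbd₂ k).2 (γq k) (hγq k)
  -- a scaling slightly below `min (γp k) (γq k)` keeps the interface condition
  have hδ : ∀ k, ∃ δ, 0 < δ ∧ δ < γp k ∧ δ < γq k ∧
      0 < δ * (1 / αhi (Sum.inr (Sum.inr k)) + ν₁ (pe k) + ν₂ (qe k))
        - ((G₁.incident (pe k)).card : ℝ) * |ν₁ (pe k)|
        - ((G₂.incident (qe k)).card : ℝ) * |ν₂ (qe k)| := by
    intro k
    have hγ : 0 < min (γp k) (γq k) := lt_min (hg₁ k).1 (hg₂ k).1
    have hk := hint k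
    set A := 1 / αhi (Sum.inr (Sum.inr k)) + ν₁ (pe k) + ν₂ (qe k)
    have hr₁ : 0 ≤ ((G₁.incident (pe k)).card : ℝ) * |ν₁ (pe k)| := by positivity
    have hr₂ : 0 ≤ ((G₂.incident (qe k)).card : ℝ) * |ν₂ (qe k)| := by positivity
    have hA : 0 < A := by
      by_contra hA
      have := mul_nonpos_of_nonneg_of_nonpos hγ.le (not_lt.mp hA)
      linarith
    obtain ⟨δ, h1, h2⟩ := exists_between (show
      (((G₁.incident (pe k)).card : ℝ) * |ν₁ (pe k)|
        + ((G₂.incident (qe k)).card : ℝ) * |ν₂ (qe k)|) / A < min (γp k) (γq k) by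
        rw [div_lt_iff₀ hA]; linarith)
    refine ⟨δ, lt_of_le_of_lt (by positivity) h1, h2.trans_le (min_le_left _ _),
      h2.trans_le (min_le_right _ _), ?_⟩
    rw [div_lt_iff₀ hA] at h1
    linarith
  choose δ hδ0 hδp hδq hδA using hδ
  intro x hx
  let d : Fin p₁ ⊕ (Fin p₂ ⊕ Fin q) → ℝ := Sum.elim (fun _ => 1) (Sum.elim (fun _ => 1) δ)
  have hS₁ : ∀ i, ∑ f, interIncMatrix G₁ G₂ pe qe (Sum.inl i) f ^ 2 * d f
      = (G₁.incident i).card + ∑ k, if pe k = i then δ k else 0 := by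
    intro i
    simp [Fintype.sum_sum_type, interIncMatrix, d, G₁.sum_incMatrix_sq]
  have hS₂ : ∀ i, ∑ f, interIncMatrix G₁ G₂ pe qe (Sum.inr i) f ^ 2 * d f
      = (G₂.incident i).card + ∑ k, if qe k = i then δ k else 0 := by
    intro i
    simp [Fintype.sum_sum_type, interIncMatrix, d, G₂.sum_incMatrix_sq]
  refine posDef_of_scaled _ _ _ d ?_ ?_ ?_ x hx
  · rintro (i | i) (e | e | e)
    · exact G₁.incMatrix_mem i e
    · exact Or.inl rfl
    · simp only [interIncMatrix, Matrix.of_apply]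
      split_ifs <;> simp
    · exact Or.inl rfl
    · exact G₂.incMatrix_mem i e
    · simp only [interIncMatrix, Matrix.of_apply]
      split_ifs <;> simp
  · rintro (e | e | e)
    · exact one_pos
    · exact one_pos
    · exact hδ0 e
  · intro e
    rw [Fintype.sum_sum_type]
    simp only [hS₁, hS₂, Sum.elim_inl, Sum.elim_inr]
    rcases e with e | e | e
    · have h := edge_dom G₁ ν₁ (fun e => 1 / αhi (Sum.inl e)) hm₁ pe hpe hpadj
        (fun k => (hbd₁ k).1) γp δ hδp (fun k => (hg₁ k).2) e
      rw [← G₁.sum_incMatrix_sq_mul e (fun i => ν₁ i + |ν₁ i| - |ν₁ i| *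
          ((G₁.incident i).card + ∑ k, if pe k = i then δ k else 0))] at h
      simpa [interIncMatrix, d] using h
    · have h := edge_dom G₂ ν₂ (fun e => 1 / αhi (Sum.inr (Sum.inl e))) hm₂ qe hqe hqadj
        (fun k => (hbd₂ k).1) γq δ hδq (fun k => (hg₂ k).2) e
      rw [← G₂.sum_incMatrix_sq_mul e (fun i => ν₂ i + |ν₂ i| - |ν₂ i| *
          ((G₂.incident i).card + ∑ k, if qe k = i then δ k else 0))] at h
      simpa [interIncMatrix, d] using h
    · have h := div_pos (hδA e) (hδ0 e)
      have hne := (hδ0 e).ne'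
      simp only [interIncMatrix, Matrix.of_apply, d, Sum.elim_inr, ite_pow, ne_eq,
        OfNat.ofNat_ne_zero, not_false_eq_true, zero_pow, one_pow, even_two, Even.neg_pow,
        ite_mul, one_mul, zero_mul, Finset.sum_ite_eq, Finset.mem_univ, if_true,
        hpe.eq_iff, hqe.eq_iff, Finset.sum_ite_eq']
      refine lt_of_lt_of_eq h ?_
      have hα := (hαhi (Sum.inr (Sum.inr e))).ne'
      field_simp
      ring
end
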